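/- arXiv:2503.04699 — 2 statements merged into one kernel-verified Lean document; each statement's English description precedes it below -/
import Mathlib

section
/- Let R be a commutative ring and a, b, c, d ∈ R. Assume the (a, b)-Koszul complex is exact at the middle term: LinearMap.ker ((u, v) ↦ a·u + b·v) = LinearMap.range (w ↦ (b·w, −a·w)). Let R₁ = R ⧸ Ideal.span {c, d} and form the modified Koszul complex R₁ → R₁ × R₁ → R₁ with maps ∂̃₂ : w ↦ (b̄·w, −ā·w) and ∂̃₁ : (u, v) ↦ ā·u + b̄·v, where ā, b̄ are the residue classes of a, b. Then the homology H(a, b; c, d) := ker ∂̃₁ ⧸ im ∂̃₂ is isomorphic as an R-module to (Ideal.span {a, b} ⊓ Ideal.span {c, d}) ⧸ Ideal.span {a·c, a·d, b·c, b·d}. -/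
noncomputable section

variable (R : Type) [CommRing R]

/-- The modified Koszul map `∂̃₁ : R₁ × R₁ → R₁`, `(u, v) ↦ ā·u + b̄·v`, where `R₁ = R ⧸ (c, d)`
and `ā, b̄` are the residue classes of `a, b`, as an `R`-linear map. -/
def modD1 (a b c d : R) :
    (R ⧸ Ideal.span ({c, d} : Set R)) × (R ⧸ Ideal.span ({c, d} : Set R)) →ₗ[R]
      (R ⧸ Ideal.span ({c, d} : Set R)) :=
  (LinearMap.mulLeft R (Ideal.Quotient.mk (Ideal.span ({c, d} : Set R)) a)).coprod
    (LinearMap.mulLeft R (Ideal.Quotient.mk (Ideal.span ({c, d} : Set R)) b))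

/-- The modified Koszul map `∂̃₂ : R₁ → R₁ × R₁`, `w ↦ (b̄·w, −ā·w)`, as an `R`-linear map. -/
def modD2 (a b c d : R) :
    (R ⧸ Ideal.span ({c, d} : Set R)) →ₗ[R]
      (R ⧸ Ideal.span ({c, d} : Set R)) × (R ⧸ Ideal.span ({c, d} : Set R)) :=
  (LinearMap.mulLeft R (Ideal.Quotient.mk (Ideal.span ({c, d} : Set R)) b)).prod
    (-(LinearMap.mulLeft R (Ideal.Quotient.mk (Ideal.span ({c, d} : Set R)) a)))

/-- The homology `H(a, b; c, d) = ker ∂̃₁ ⧸ im ∂̃₂` of the modified Koszul complex. -/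
abbrev koszulHomology (a b c d : R) :=
  (LinearMap.ker (modD1 R a b c d)) ⧸
    ((LinearMap.range (modD2 R a b c d)).comap (LinearMap.ker (modD1 R a b c d)).subtype)

/-- The intersection of ideals `W = (a, b) ⊓ (c, d)` as a submodule of `R`. -/
abbrev interIdeal (a b c d : R) : Submodule R R :=
  (Ideal.span ({a, b} : Set R) ⊓ Ideal.span ({c, d} : Set R) : Ideal R)

/-- The ideal `W₀ = (a·c, a·d, b·c, b·d)`, viewed as a submodule of `W = (a, b) ⊓ (c, d)`. -/
abbrev prodIdealIn (a b c d : R) : Submodule R (interIdeal R a b c d) :=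
  Submodule.comap (interIdeal R a b c d).subtype
    (Ideal.span ({a * c, a * d, b * c, b * d} : Set R) : Submodule R R)

/-!
Let `f : M₂ → M₁`, `g : M₁ → M₀` be exact at `M₁`, and let `π` be a morphism from it to
`f' : N₂ → N₁`, `g' : N₁ → N₀` with `π₁` and `π₂` surjective. Pulling the homology
`ker g' / range f'` back along `π₁` presents it as the subquotient
`ker (π₀ ∘ g) / (range f ⊔ ker π₁)` of `M₁`. By exactness the denominator is `ker g ⊔ ker π₁`, so
pushing this subquotient forward along `g` loses nothing and gives
`(range g ⊓ ker π₀) / g (ker π₁)`. For the Koszul complex of `(a, b)` and reduction modulo an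
ideal `J`, numerator and denominator are `(a, b) ⊓ J` and `(a, b) * J`.
-/

section Subquotient

variable {A M N : Type*} [Ring A] [AddCommGroup M] [Module A M] [AddCommGroup N] [Module A N]

/-- The isomorphism of subquotients `P / Q ≃ P' / Q'` induced by a linear map `f` with
`f P = P'` and `f⁻¹ Q' = Q`. A subquotient `P / Q` is encoded as `P ⧸ Q.submoduleOf P`, without
requiring `Q ≤ P`, so that it really is `P / (Q ⊓ P)`. -/
def subquotientEquiv (f : M →ₗ[A] N) {P Q : Submodule A M} {P' Q' : Submodule A N}
    (hP : P.map f = P') (hQ : Q'.comap f = Q) :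
    (P ⧸ Q.submoduleOf P) ≃ₗ[A] P' ⧸ Q'.submoduleOf P' :=
  let toQuotient := (Q'.submoduleOf P').mkQ ∘ₗ f.restrict (Submodule.map_le_iff_le_comap.1 hP.le)
  have ker_eq : Q.submoduleOf P = LinearMap.ker toQuotient := by
    rw [LinearMap.ker_comp, Submodule.ker_mkQ, ← hQ]
    rfl
  have surjective : Function.Surjective toQuotient := by
    refine (Submodule.mkQ_surjective _).comp ?_
    rintro ⟨y, hy⟩
    obtain ⟨x, hx, rfl⟩ := hP.ge hy
    exact ⟨⟨x, hx⟩, rfl⟩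
  Submodule.quotEquivOfEq _ _ ker_eq ≪≫ₗ toQuotient.quotKerEquivOfSurjective surjective

end Subquotient

section Ladder

variable {A M₂ M₁ M₀ N₂ N₁ N₀ : Type*} [Ring A]
  [AddCommGroup M₂] [Module A M₂] [AddCommGroup M₁] [Module A M₁] [AddCommGroup M₀] [Module A M₀]
  [AddCommGroup N₂] [Module A N₂] [AddCommGroup N₁] [Module A N₁] [AddCommGroup N₀] [Module A N₀]
  {f : M₂ →ₗ[A] M₁} {g : M₁ →ₗ[A] M₀} {f' : N₂ →ₗ[A] N₁} {g' : N₁ →ₗ[A] N₀}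
  {π₂ : M₂ →ₗ[A] N₂} {π₁ : M₁ →ₗ[A] N₁} {π₀ : M₀ →ₗ[A] N₀}

theorem comap_ker_eq_comap_ker (hg : π₀ ∘ₗ g = g' ∘ₗ π₁) :
    (LinearMap.ker g').comap π₁ = (LinearMap.ker π₀).comap g := by
  rw [← LinearMap.ker_comp, ← LinearMap.ker_comp, hg]

theorem comap_range_eq_range_sup_ker (hf : π₁ ∘ₗ f = f' ∘ₗ π₂) (hπ₂ : Function.Surjective π₂) :
    (LinearMap.range f').comap π₁ = LinearMap.range f ⊔ LinearMap.ker π₁ := by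
  rw [← LinearMap.range_comp_of_range_eq_top f' (LinearMap.range_eq_top.2 hπ₂), ← hf,
    LinearMap.range_comp, Submodule.comap_map_eq]

/-- The homology of the bottom row of a commutative ladder whose top row is exact at `M₁` and whose
vertical maps `π₂` and `π₁` are surjective, as a subquotient of `M₀`. -/
def homologyEquivOfExact (hfg : LinearMap.ker g = LinearMap.range f)
    (hf : π₁ ∘ₗ f = f' ∘ₗ π₂) (hg : π₀ ∘ₗ g = g' ∘ₗ π₁)
    (hπ₂ : Function.Surjective π₂) (hπ₁ : Function.Surjective π₁) :
    (LinearMap.ker g' ⧸ (LinearMap.range f').submoduleOf (LinearMap.ker g')) ≃ₗ[A]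
      ↥(LinearMap.range g ⊓ LinearMap.ker π₀) ⧸
        ((LinearMap.ker π₁).map g).submoduleOf (LinearMap.range g ⊓ LinearMap.ker π₀) :=
  have cycles : ((LinearMap.ker π₀).comap g).map π₁ = LinearMap.ker g' := by
    rw [← comap_ker_eq_comap_ker hg, Submodule.map_comap_eq_of_surjective hπ₁]
  have boundaries : ((LinearMap.ker π₁).map g).comap g = (LinearMap.range f').comap π₁ := by
    rw [comap_range_eq_range_sup_ker hf hπ₂, Submodule.comap_map_eq, hfg, sup_comm]
  (subquotientEquiv π₁ cycles rfl).symm ≪≫ₗ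
    subquotientEquiv g (Submodule.map_comap_eq g _) boundaries

end Ladder

section Koszul

/-- The Koszul differential `(u, v) ↦ x * u + y * v` of a pair `x, y` in an `A`-algebra `B`, as an
`A`-linear map: the Koszul complexes over `A` and over `A ⧸ J` then both consist of `A`-modules. -/
def koszulD1 (A : Type*) {B : Type*} [CommRing A] [CommRing B] [Algebra A B] (x y : B) :
    B × B →ₗ[A] B :=
  (LinearMap.mulLeft A x).coprod (LinearMap.mulLeft A y)

/-- The Koszul differential `w ↦ (y * w, -(x * w))` of a pair `x, y` in an `A`-algebra `B`, as an
`A`-linear map. -/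
def koszulD2 (A : Type*) {B : Type*} [CommRing A] [CommRing B] [Algebra A B] (x y : B) :
    B →ₗ[A] B × B :=
  (LinearMap.mulLeft A y).prod (-LinearMap.mulLeft A x)

variable {A B C : Type*} [CommRing A] [CommRing B] [Algebra A B] [CommRing C] [Algebra A C]

theorem comp_koszulD1 (φ : B →ₐ[A] C) (x y : B) :
    φ.toLinearMap ∘ₗ koszulD1 A x y =
      koszulD1 A (φ x) (φ y) ∘ₗ φ.toLinearMap.prodMap φ.toLinearMap := by
  ext <;> simp [koszulD1]

theorem prodMap_comp_koszulD2 (φ : B →ₐ[A] C) (x y : B) :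
    φ.toLinearMap.prodMap φ.toLinearMap ∘ₗ koszulD2 A x y =
      koszulD2 A (φ x) (φ y) ∘ₗ φ.toLinearMap := by
  ext <;> simp [koszulD2]

theorem map_mulLeft_eq_span_singleton_mul (a : A) (J : Ideal A) :
    Submodule.map (LinearMap.mulLeft A a) J = Ideal.span {a} * J := by
  rw [← smul_eq_mul, Submodule.ideal_span_singleton_smul]
  rfl

theorem map_koszulD1_prod (a b : A) (J : Ideal A) :
    (Submodule.prod J J).map (koszulD1 A a b) = Ideal.span {a, b} * J := by
  rw [koszulD1, LinearMap.map_coprod_prod, map_mulLeft_eq_span_singleton_mul,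
    map_mulLeft_eq_span_singleton_mul, Ideal.span_insert, Ideal.sup_mul]

theorem range_koszulD1 (a b : A) : LinearMap.range (koszulD1 A a b) = Ideal.span {a, b} := by
  rw [LinearMap.range_eq_map, ← Submodule.prod_top, map_koszulD1_prod, Ideal.mul_top]

theorem koszul_homology_eq_ideal_quotient_general (a b : A) (J : Ideal A)
    (hab : LinearMap.ker (koszulD1 A a b) = LinearMap.range (koszulD2 A a b)) :
    Nonempty ((LinearMap.ker (koszulD1 A (Ideal.Quotient.mk J a) (Ideal.Quotient.mk J b)) ⧸
        (LinearMap.range (koszulD2 A (Ideal.Quotient.mk J a) (Ideal.Quotient.mk J b))).submoduleOf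
          (LinearMap.ker (koszulD1 A (Ideal.Quotient.mk J a) (Ideal.Quotient.mk J b)))) ≃ₗ[A]
      ↥(Ideal.span {a, b} ⊓ J) ⧸ (Ideal.span {a, b} * J).submoduleOf (Ideal.span {a, b} ⊓ J)) := by
  let π := Ideal.Quotient.mkₐ A J
  have hπ : Function.Surjective π := Ideal.Quotient.mkₐ_surjective A J
  have ker_π : LinearMap.ker π.toLinearMap = J := J.ker_mkQ
  have equiv := homologyEquivOfExact hab (prodMap_comp_koszulD2 π a b) (comp_koszulD1 π a b) hπ
    (hπ.prodMap hπ)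
  rw [LinearMap.ker_prodMap, ker_π, range_koszulD1, map_koszulD1_prod] at equiv
  exact ⟨equiv⟩

end Koszul

/-- If the `(a, b)`-Koszul complex is exact at the middle term, then the homology
`H(a, b; c, d)` of the modified Koszul complex over `R ⧸ (c, d)` is isomorphic as an
`R`-module to `((a, b) ⊓ (c, d)) ⧸ (a·c, a·d, b·c, b·d)`. -/
theorem koszul_homology_eq_ideal_quotient (a b c d : R)
    (hab : LinearMap.ker ((LinearMap.mulLeft R a).coprod (LinearMap.mulLeft R b)) =
      LinearMap.range ((LinearMap.mulLeft R b).prod (-(LinearMap.mulLeft R a)))) :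
    Nonempty ((koszulHomology R a b c d) ≃ₗ[R]
      ((interIdeal R a b c d) ⧸ (prodIdealIn R a b c d))) := by
  have equiv := koszul_homology_eq_ideal_quotient_general a b (Ideal.span {c, d}) hab
  rwa [Ideal.span_pair_mul_span_pair] at equiv
end
end

section
/- For the BB(1̄, 1̄, 3, 3) code, with f = 1 + x + x^{-1} y³ and g = 1 + y + y^{-1} x³ in R, the topological index is Q = dim_{F₂} R ⧸ (f, g) = 8; hence this code supports 2^{16} anyon types and k_max = 16. -/
noncomputable section

/-- The Laurent polynomial ring `F₂[x^±, y^±]` as a group algebra. -/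
abbrev LaurentR : Type := AddMonoidAlgebra (ZMod 2) (ℤ × ℤ)

/-- The monomial `x^i y^j`. -/
def mono (i j : ℤ) : LaurentR := AddMonoidAlgebra.single (i, j) 1

/-!
Clearing denominators turns `f` and `g` into `y³ + x + x²` and `x³ + y + y²`. Put
`p = x² + x + 1`, the third cyclotomic polynomial. Modulo the cleared relations
`p ((x + 1) y + x) = 0`; eliminating `y` gives `x p³ = 0`, and hence `p³ = 0` as `x` is a unit.
Over `F₄` the solutions are the points `(ω, ω²)`, of multiplicity three, and `(ω, ω)`, which is
simple, together with their conjugates. Near the first, `y` is a polynomial `q(x)`; near the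
second, `y = x`. Therefore `(f, g) = (p³, y - q(x)) (p, y - x)` is a product of coprime ideals,
and the Chinese remainder theorem gives `R/(f, g) ≃ F₂[t]/(p³) × F₂[t]/(p)`, of dimension `6 + 2`.
-/

open Polynomial Ideal

section LaurentPolynomials

variable {K A : Type*} [CommRing K] [CommRing A] [Algebra K A]

theorem multiplicative_int_prod_hom_ext {M : Type*} [Monoid M]
    {φ ψ : Multiplicative (ℤ × ℤ) →* M} (hx : φ (.ofAdd (1, 0)) = ψ (.ofAdd (1, 0)))
    (hy : φ (.ofAdd (0, 1)) = ψ (.ofAdd (0, 1))) : φ = ψ := by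
  have h_fst : φ.comp (AddMonoidHom.inl ℤ ℤ).toMultiplicative =
      ψ.comp (AddMonoidHom.inl ℤ ℤ).toMultiplicative := MonoidHom.ext_mint hx
  have h_snd : φ.comp (AddMonoidHom.inr ℤ ℤ).toMultiplicative =
      ψ.comp (AddMonoidHom.inr ℤ ℤ).toMultiplicative := MonoidHom.ext_mint hy
  ext p
  obtain ⟨i, j⟩ := p
  have h_split : Multiplicative.ofAdd (i, j) = .ofAdd (i, 0) * .ofAdd (0, j) := by
    rw [← ofAdd_add, Prod.mk_add_mk, add_zero, zero_add]
  change φ (.ofAdd (i, j)) = ψ (.ofAdd (i, j))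
  rw [h_split, map_mul, map_mul]
  exact congrArg₂ (· * ·) (DFunLike.congr_fun h_fst (.ofAdd i))
    (DFunLike.congr_fun h_snd (.ofAdd j))

theorem laurent_algHom_ext {φ ψ : AddMonoidAlgebra K (ℤ × ℤ) →ₐ[K] A}
    (hx : φ (.single (1, 0) 1) = ψ (.single (1, 0) 1))
    (hy : φ (.single (0, 1) 1) = ψ (.single (0, 1) 1)) : φ = ψ :=
  (AddMonoidAlgebra.lift K A (ℤ × ℤ)).symm.injective (multiplicative_int_prod_hom_ext hx hy)

/-- Evaluation of Laurent polynomials in two variables at a pair of units. -/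
def laurentEval (u v : Aˣ) : AddMonoidAlgebra K (ℤ × ℤ) →ₐ[K] A :=
  AddMonoidAlgebra.lift K A (ℤ × ℤ) <| (Units.coeHom A).comp <|
    ((zpowersHom Aˣ u).coprod (zpowersHom Aˣ v)).comp
      (MulEquiv.prodMultiplicative ℤ ℤ).toMonoidHom

theorem laurentEval_single (u v : Aˣ) (i j : ℤ) :
    laurentEval (K := K) u v (.single (i, j) 1) = ↑(u ^ i * v ^ j) := by
  simp [laurentEval, MulEquiv.prodMultiplicative]

end LaurentPolynomials

section GraphIdeal

variable {K S : Type*} [CommRing K] [CommRing S] [Algebra K S]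

/-- The ideal `(P(x), y - q(x))`, which cuts out the part of the graph of `q` lying over the
zeros of `P`. -/
def graphIdeal (x y : S) (P q : K[X]) : Ideal S := span {aeval x P, y - aeval x q}

theorem isUnit_adjoinRoot_mk {P q : K[X]} (h : IsCoprime q P) : IsUnit (AdjoinRoot.mk P q) := by
  rw [← isCoprime_zero_right, ← AdjoinRoot.mk_self]
  exact h.map (AdjoinRoot.mk P)

theorem aeval_mk_graphIdeal (x y : S) (P q : K[X]) :
    aeval (Ideal.Quotient.mk (graphIdeal x y P q) x) P = 0 := by
  rw [← Ideal.Quotient.mkₐ_eq_mk K, aeval_algHom_apply, Ideal.Quotient.mkₐ_eq_mk,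
    Ideal.Quotient.eq_zero_iff_mem]
  exact subset_span (Set.mem_insert _ _)

theorem aeval_mk_graphIdeal_eq_mk (x y : S) (P q : K[X]) :
    aeval (Ideal.Quotient.mk (graphIdeal x y P q) x) q =
      Ideal.Quotient.mk (graphIdeal x y P q) y := by
  rw [← Ideal.Quotient.mkₐ_eq_mk K, aeval_algHom_apply, Ideal.Quotient.mkₐ_eq_mk, eq_comm,
    Ideal.Quotient.eq]
  exact subset_span (Set.mem_insert_of_mem _ rfl)

theorem graphIdeal_le_ker {B : Type*} [CommRing B] [Algebra K B] {φ : S →ₐ[K] B} {x y : S}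
    {P q : K[X]} (hx : aeval (φ x) P = 0) (hy : φ y = aeval (φ x) q) :
    graphIdeal x y P q ≤ RingHom.ker φ := by
  rw [graphIdeal, span_le]
  rintro _ (rfl | rfl)
  · rwa [SetLike.mem_coe, RingHom.mem_ker, ← aeval_algHom_apply]
  · rwa [SetLike.mem_coe, RingHom.mem_ker, map_sub, ← aeval_algHom_apply, sub_eq_zero]

/-- The ideal `(P(x), y - q(x))` of the Laurent polynomial ring `K[x^±, y^±]`. -/
abbrev laurentGraphIdeal (P q : K[X]) : Ideal (AddMonoidAlgebra K (ℤ × ℤ)) :=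
  graphIdeal (.single (1, 0) 1) (.single (0, 1) 1) P q

/-- The map `K[t]/(P) → K[x^±, y^±]/(P(x), y - q(x))` sending `t` to `x`. -/
def adjoinRootToLaurentQuotient (P q : K[X]) :
    AdjoinRoot P →ₐ[K] AddMonoidAlgebra K (ℤ × ℤ) ⧸ laurentGraphIdeal P q :=
  AdjoinRoot.liftAlgHom P (Algebra.ofId K _) (Ideal.Quotient.mk _ (.single (1, 0) 1))
    (aeval_mk_graphIdeal _ _ P q)

theorem adjoinRootToLaurentQuotient_root (P q : K[X]) :
    adjoinRootToLaurentQuotient P q (AdjoinRoot.root P) =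
      Ideal.Quotient.mk _ (.single (1, 0) 1) :=
  AdjoinRoot.liftAlgHom_root ..

theorem adjoinRootToLaurentQuotient_mk (P q : K[X]) :
    adjoinRootToLaurentQuotient P q (AdjoinRoot.mk P q) =
      Ideal.Quotient.mk _ (.single (0, 1) 1) := by
  rw [← AdjoinRoot.aeval_eq, ← aeval_algHom_apply, adjoinRootToLaurentQuotient_root,
    aeval_mk_graphIdeal_eq_mk]

variable {P q : K[X]}

theorem laurentGraphIdeal_le_ker_laurentEval {u v : (AdjoinRoot P)ˣ}
    (hu : (u : AdjoinRoot P) = AdjoinRoot.root P) (hv : (v : AdjoinRoot P) = AdjoinRoot.mk P q) :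
    laurentGraphIdeal P q ≤ RingHom.ker (laurentEval (K := K) u v) := by
  apply graphIdeal_le_ker <;>
    simp [laurentEval_single, hu, hv, AdjoinRoot.aeval_eq]

/-- The map `K[x^±, y^±]/(P(x), y - q(x)) → K[t]/(P)` sending `x` to `u = t` and `y` to
`v = q(t)`. -/
def laurentQuotientToAdjoinRoot {u v : (AdjoinRoot P)ˣ}
    (hu : (u : AdjoinRoot P) = AdjoinRoot.root P) (hv : (v : AdjoinRoot P) = AdjoinRoot.mk P q) :
    (AddMonoidAlgebra K (ℤ × ℤ) ⧸ laurentGraphIdeal P q) →ₐ[K] AdjoinRoot P :=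
  Ideal.Quotient.liftₐ _ (laurentEval u v) (laurentGraphIdeal_le_ker_laurentEval hu hv)

theorem laurentQuotientToAdjoinRoot_mk_single {u v : (AdjoinRoot P)ˣ}
    (hu : (u : AdjoinRoot P) = AdjoinRoot.root P) (hv : (v : AdjoinRoot P) = AdjoinRoot.mk P q)
    (i j : ℤ) :
    laurentQuotientToAdjoinRoot hu hv (Ideal.Quotient.mk _ (.single (i, j) 1)) =
      ↑(u ^ i * v ^ j) :=
  laurentEval_single u v i j

/-- When `t` and `q(t)` are invertible in `K[t]/(P)`, projecting the graph of `q` to the first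
coordinate identifies `K[x^±, y^±]/(P(x), y - q(x))` with `K[t]/(P)`. -/
def laurentQuotientEquivAdjoinRoot (hX : IsCoprime X P) (hq : IsCoprime q P) :
    (AddMonoidAlgebra K (ℤ × ℤ) ⧸ laurentGraphIdeal P q) ≃ₐ[K] AdjoinRoot P :=
  have hu : ((isUnit_adjoinRoot_mk hX).unit : AdjoinRoot P) = AdjoinRoot.root P :=
    AdjoinRoot.mk_X
  have hv : ((isUnit_adjoinRoot_mk hq).unit : AdjoinRoot P) = AdjoinRoot.mk P q := rfl
  AlgEquiv.ofAlgHom (laurentQuotientToAdjoinRoot hu hv) (adjoinRootToLaurentQuotient P q)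
    (AdjoinRoot.algHom_ext <| by
      simp [adjoinRootToLaurentQuotient_root, laurentQuotientToAdjoinRoot_mk_single])
    (Ideal.Quotient.algHom_ext _ <| laurent_algHom_ext
      (by simp [laurentQuotientToAdjoinRoot_mk_single, adjoinRootToLaurentQuotient_root])
      (by simp [laurentQuotientToAdjoinRoot_mk_single, adjoinRootToLaurentQuotient_mk]))

end GraphIdeal

theorem span_pair_mul_left_units {S : Type*} [CommRing S] {a b : S} (ha : IsUnit a)
    (hb : IsUnit b) (f g : S) : span {a * f, b * g} = span {f, g} := by
  rw [span_insert, span_singleton_mul_left_unit ha, span_singleton_mul_left_unit hb,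
    ← span_insert]

/-- The Chinese remainder theorem for two coprime ideals of an algebra. -/
def quotientMulAlgEquivProd (K : Type*) {S : Type*} [CommRing K] [CommRing S] [Algebra K S]
    (I J : Ideal S) (h : IsCoprime I J) : (S ⧸ I * J) ≃ₐ[K] (S ⧸ I) × (S ⧸ J) :=
  AlgEquiv.ofRingEquiv (f := quotientMulEquivQuotientProd I J h) fun _ => rfl

theorem isCoprime_X_cyclotomic_three (K : Type*) [CommRing K] :
    IsCoprime (X : K[X]) (cyclotomic 3 K) :=
  ⟨-(X + 1), 1, by rw [cyclotomic_three]; ring⟩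

theorem aeval_cyclotomic_three (K : Type*) {S : Type*} [CommRing K] [CommRing S] [Algebra K S]
    (x : S) : aeval x (cyclotomic 3 K) = x ^ 2 + x + 1 := by
  simp [cyclotomic_three]

theorem span_relations_le_graphIdeal_X (K : Type*) {S : Type*} [CommRing K] [CommRing S]
    [Algebra K S] (x y : S) :
    span {y ^ 3 + x + x ^ 2, x ^ 3 + y + y ^ 2} ≤ graphIdeal x y (cyclotomic 3 K) X := by
  rw [graphIdeal, aeval_cyclotomic_three, aeval_X, span_le]
  rintro _ (rfl | rfl)
  · exact mem_span_pair.2 ⟨x, y ^ 2 + y * x + x ^ 2, by ring⟩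
  · exact mem_span_pair.2 ⟨x, 1 + y + x, by ring⟩

section CharTwo

/-- The polynomial `q` with `y = q(x)` near the triple point `(ω, ω²)`: the solution of
`y² + y + x³ = 0` modulo `(x² + x + 1)³` that lifts `y = x²`. -/
def triplePointBranch : (ZMod 2)[X] := X ^ 2 + X * (X + 1) ^ 2 * cyclotomic 3 (ZMod 2)

theorem isCoprime_triplePointBranch_cyclotomic_three :
    IsCoprime triplePointBranch (cyclotomic 3 (ZMod 2)) :=
  (isCoprime_X_cyclotomic_three (ZMod 2)).pow_left.add_mul_right_left _

variable {S : Type*} [CommRing S] [Algebra (ZMod 2) S]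

theorem aeval_triplePointBranch (x : S) :
    aeval x triplePointBranch = x ^ 2 + x * (x + 1) ^ 2 * (x ^ 2 + x + 1) := by
  simp [triplePointBranch]

variable (S) in
theorem two_eq_zero_of_algebra_zmod_two : (2 : S) = 0 := by
  rw [← map_ofNat (algebraMap (ZMod 2) S) 2, show (OfNat.ofNat 2 : ZMod 2) = 0 from rfl, map_zero]

variable {x y : S}

theorem cyclotomic_three_mul_eq (x y : S) :
    (x ^ 2 + x + 1) * ((x + 1) * y + x) =
      (y ^ 3 + x + x ^ 2) + (y + 1) * (x ^ 3 + y + y ^ 2) := by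
  have h2 := two_eq_zero_of_algebra_zmod_two S
  grind

theorem cyclotomic_three_cube_eq_zero (hx : IsUnit x) (hf : y ^ 3 + x + x ^ 2 = 0)
    (hg : x ^ 3 + y + y ^ 2 = 0) : (x ^ 2 + x + 1) ^ 3 = 0 := by
  have h2 := two_eq_zero_of_algebra_zmod_two S
  have h_elim : x * (x ^ 2 + x + 1) ^ 3 =
      (x + 1) ^ 2 * (x ^ 2 + x + 1) * (x ^ 3 + y + y ^ 2) +
        (x ^ 2 + x + 1) * ((x + 1) * y + x) * ((x + 1) * y + 1) := by
    grind
  refine hx.mul_left_cancel ?_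
  rw [h_elim, cyclotomic_three_mul_eq, hf, hg]
  ring

theorem cyclotomic_three_mul_sub_branch_eq_zero (hf : y ^ 3 + x + x ^ 2 = 0)
    (hg : x ^ 3 + y + y ^ 2 = 0) (h_cube : (x ^ 2 + x + 1) ^ 3 = 0) :
    (x ^ 2 + x + 1) * (y - aeval x triplePointBranch) = 0 := by
  have h2 := two_eq_zero_of_algebra_zmod_two S
  rw [aeval_triplePointBranch]
  set q := x ^ 2 + x * (x + 1) ^ 2 * (x ^ 2 + x + 1)
  have h_branch : (x ^ 2 + x + 1) * (y - q) =
      (x ^ 2 + x) * x *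
          ((x ^ 2 + x + 1) * ((x + 1) * y + x) + x ^ 2 * (x ^ 2 + x + 1) ^ 3) +
        (x ^ 2 + x + 1) ^ 3 * (y - q) := by
    grind
  rw [h_branch, cyclotomic_three_mul_eq, hf, hg, h_cube]
  ring

theorem sub_branch_mul_sub_eq_zero (hg : x ^ 3 + y + y ^ 2 = 0)
    (h_cube : (x ^ 2 + x + 1) ^ 3 = 0)
    (h_branch : (x ^ 2 + x + 1) * (y - aeval x triplePointBranch) = 0) :
    (y - aeval x triplePointBranch) * (y - x) = 0 := by
  have h2 := two_eq_zero_of_algebra_zmod_two S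
  rw [aeval_triplePointBranch] at h_branch ⊢
  set q := x ^ 2 + x * (x + 1) ^ 2 * (x ^ 2 + x + 1)
  have h_prod : (y - q) * (y - x) =
      (x ^ 3 + y + y ^ 2) + (x ^ 3 + x + 1) * ((x ^ 2 + x + 1) * (y - q)) +
        (x ^ 4 + x ^ 3 + x) * (x ^ 2 + x + 1) ^ 3 := by
    grind
  rw [h_prod, hg, h_branch, h_cube]
  ring

theorem relations_of_eq_branch (h_cube : (x ^ 2 + x + 1) ^ 3 = 0)
    (hy : y = aeval x triplePointBranch) :
    y ^ 3 + x + x ^ 2 = 0 ∧ x ^ 3 + y + y ^ 2 = 0 := by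
  have h2 := two_eq_zero_of_algebra_zmod_two S
  rw [aeval_triplePointBranch] at hy
  have hg : x ^ 3 + y + y ^ 2 = 0 := calc
    x ^ 3 + y + y ^ 2 = (x ^ 4 + x ^ 3 + x) * (x ^ 2 + x + 1) ^ 3 := by grind
    _ = 0 := by rw [h_cube, mul_zero]
  have h_mul : (x ^ 2 + x + 1) * ((x + 1) * y + x) = 0 := calc
    (x ^ 2 + x + 1) * ((x + 1) * y + x) = x ^ 2 * (x ^ 2 + x + 1) ^ 3 := by grind
    _ = 0 := by rw [h_cube, mul_zero]
  refine ⟨?_, hg⟩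
  rwa [cyclotomic_three_mul_eq, hg, mul_zero, add_zero] at h_mul

theorem isCoprime_graphIdeal (x y : S) :
    IsCoprime (graphIdeal x y (cyclotomic 3 (ZMod 2) ^ 3) triplePointBranch)
      (graphIdeal x y (cyclotomic 3 (ZMod 2)) X) := by
  have h2 := two_eq_zero_of_algebra_zmod_two S
  refine isCoprime_iff_exists.2 ⟨y - aeval x triplePointBranch,
    subset_span (Set.mem_insert_of_mem _ rfl), _,
    mem_span_pair.2 ⟨1 + x * (x + 1) ^ 2, 1, rfl⟩, ?_⟩
  rw [aeval_triplePointBranch, aeval_cyclotomic_three, aeval_X]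
  grind

theorem graphIdeal_mul_graphIdeal_le (hx : IsUnit x) :
    graphIdeal x y (cyclotomic 3 (ZMod 2) ^ 3) triplePointBranch *
        graphIdeal x y (cyclotomic 3 (ZMod 2)) X ≤
      span {y ^ 3 + x + x ^ 2, x ^ 3 + y + y ^ 2} := by
  set J : Ideal S := span {y ^ 3 + x + x ^ 2, x ^ 3 + y + y ^ 2}
  let π := Ideal.Quotient.mkₐ (ZMod 2) J
  have hf : π (y ^ 3 + x + x ^ 2) = 0 :=
    Ideal.Quotient.eq_zero_iff_mem.2 (subset_span (Set.mem_insert _ _))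
  have hg : π (x ^ 3 + y + y ^ 2) = 0 :=
    Ideal.Quotient.eq_zero_iff_mem.2 (subset_span (Set.mem_insert_of_mem _ rfl))
  rw [map_add, map_add, map_pow, map_pow] at hf hg
  have h_cube := cyclotomic_three_cube_eq_zero (hx.map π) hf hg
  have h_branch := cyclotomic_three_mul_sub_branch_eq_zero hf hg h_cube
  have h_prod := sub_branch_mul_sub_eq_zero hg h_cube h_branch
  rw [graphIdeal, graphIdeal, span_pair_mul_span_pair, span_le]
  rintro r hr
  rw [SetLike.mem_coe, ← Ideal.Quotient.eq_zero_iff_mem]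
  change π r = 0
  rcases hr with rfl | rfl | rfl | rfl <;>
    simp only [map_mul, map_sub, map_pow, ← aeval_algHom_apply]
  all_goals simp only [aeval_cyclotomic_three, aeval_X, h_cube, h_prod, zero_mul]
  rw [mul_comm, h_branch]

theorem span_relations_le_graphIdeal_branch (x y : S) :
    span {y ^ 3 + x + x ^ 2, x ^ 3 + y + y ^ 2} ≤
      graphIdeal x y (cyclotomic 3 (ZMod 2) ^ 3) triplePointBranch := by
  have h_cube := aeval_mk_graphIdeal x y (cyclotomic 3 (ZMod 2) ^ 3) triplePointBranch
  have h_branch := aeval_mk_graphIdeal_eq_mk x y (cyclotomic 3 (ZMod 2) ^ 3) triplePointBranch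
  rw [map_pow, aeval_cyclotomic_three] at h_cube
  obtain ⟨hf, hg⟩ := relations_of_eq_branch h_cube h_branch.symm
  rw [span_le]
  rintro _ (rfl | rfl)
  · exact Ideal.Quotient.eq_zero_iff_mem.1 hf
  · exact Ideal.Quotient.eq_zero_iff_mem.1 hg

theorem graphIdeal_mul_graphIdeal (hx : IsUnit x) :
    graphIdeal x y (cyclotomic 3 (ZMod 2) ^ 3) triplePointBranch *
        graphIdeal x y (cyclotomic 3 (ZMod 2)) X =
      span {y ^ 3 + x + x ^ 2, x ^ 3 + y + y ^ 2} := by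
  refine le_antisymm (graphIdeal_mul_graphIdeal_le hx) ?_
  rw [mul_eq_inf_of_isCoprime (isCoprime_graphIdeal x y)]
  exact le_inf (span_relations_le_graphIdeal_branch x y)
    (span_relations_le_graphIdeal_X (ZMod 2) x y)

end CharTwo

theorem mono_mul_mono (i j k l : ℤ) : mono i j * mono k l = mono (i + k) (j + l) := by
  simp [mono, AddMonoidAlgebra.single_mul_single]

theorem mono_pow (i j : ℤ) (n : ℕ) : mono i j ^ n = mono (n * i) (n * j) := by
  simp [mono, AddMonoidAlgebra.single_pow]

theorem mono_zero_zero : mono 0 0 = 1 := rfl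

theorem isUnit_mono (i j : ℤ) : IsUnit (mono i j) :=
  .of_mul_eq_one (mono (-i) (-j)) <| by
    rw [mono_mul_mono, add_neg_cancel, add_neg_cancel, mono_zero_zero]

theorem span_bb_1133_eq_mul_graphIdeal :
    span {1 + mono 1 0 + mono (-1) 3, 1 + mono 0 1 + mono 3 (-1)} =
      laurentGraphIdeal (cyclotomic 3 (ZMod 2) ^ 3) triplePointBranch *
        laurentGraphIdeal (cyclotomic 3 (ZMod 2)) X := by
  have hf : mono 1 0 * (1 + mono 1 0 + mono (-1) 3) =
      mono 0 1 ^ 3 + mono 1 0 + mono 1 0 ^ 2 := by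
    simp [mul_add, mono_mul_mono, mono_pow, add_comm, add_left_comm]
  have hg : mono 0 1 * (1 + mono 0 1 + mono 3 (-1)) =
      mono 1 0 ^ 3 + mono 0 1 + mono 0 1 ^ 2 := by
    simp [mul_add, mono_mul_mono, mono_pow, add_comm, add_left_comm]
  rw [← span_pair_mul_left_units (isUnit_mono 1 0) (isUnit_mono 0 1), hf, hg]
  exact (graphIdeal_mul_graphIdeal (isUnit_mono 1 0)).symm

/-- The quotient `R/(f, g)` splits into the contribution `F₂[t]/(t² + t + 1)³` of the conjugate
triple points `(ω, ω²)`, `(ω², ω)` and the contribution `F₂[t]/(t² + t + 1)` of the simple points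
`(ω, ω)`, `(ω², ω²)`. -/
def bb1133QuotientEquiv :
    (LaurentR ⧸ span ({1 + mono 1 0 + mono (-1) 3, 1 + mono 0 1 + mono 3 (-1)} : Set LaurentR))
      ≃ₐ[ZMod 2] AdjoinRoot (cyclotomic 3 (ZMod 2) ^ 3) × AdjoinRoot (cyclotomic 3 (ZMod 2)) :=
  have hX := isCoprime_X_cyclotomic_three (ZMod 2)
  (Ideal.quotientEquivAlgOfEq (ZMod 2) span_bb_1133_eq_mul_graphIdeal).trans <|
    (quotientMulAlgEquivProd (ZMod 2) _ _ (isCoprime_graphIdeal _ _)).trans <|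
      (laurentQuotientEquivAdjoinRoot hX.pow_right
        isCoprime_triplePointBranch_cyclotomic_three.pow_right).prodCongr
        (laurentQuotientEquivAdjoinRoot hX hX)

/-- For the BB(1̄, 1̄, 3, 3) code, with `f = 1 + x + x⁻¹y³` and `g = 1 + y + y⁻¹x³`, the
topological index is `Q = dim_{F₂} R/(f, g) = 8`; hence `k_max = 2Q = 16` (and the code
supports `2^16` anyon types). -/
theorem bb_1133_topological_index :
    Module.finrank (ZMod 2)
      (LaurentR ⧸ Ideal.span ({1 + mono 1 0 + mono (-1) 3,
        1 + mono 0 1 + mono 3 (-1)} : Set LaurentR)) = 8 ∧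
    2 * Module.finrank (ZMod 2)
      (LaurentR ⧸ Ideal.span ({1 + mono 1 0 + mono (-1) 3,
        1 + mono 0 1 + mono 3 (-1)} : Set LaurentR)) = 16 := by
  have h_monic : (cyclotomic 3 (ZMod 2)).Monic := cyclotomic.monic 3 (ZMod 2)
  have h_deg : (cyclotomic 3 (ZMod 2)).natDegree = 2 := natDegree_cyclotomic 3 (ZMod 2)
  have h_adjoin (P : (ZMod 2)[X]) : Module.finrank (ZMod 2) (AdjoinRoot P) = P.natDegree :=
    finrank_quotient_span_eq_natDegree
  have := h_monic.finite_adjoinRoot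
  have := (h_monic.pow 3).finite_adjoinRoot
  have h_finrank : Module.finrank (ZMod 2)
      (LaurentR ⧸ Ideal.span ({1 + mono 1 0 + mono (-1) 3,
        1 + mono 0 1 + mono 3 (-1)} : Set LaurentR)) = 8 := by
    rw [bb1133QuotientEquiv.toLinearEquiv.finrank_eq, Module.finrank_prod,
      h_adjoin, h_adjoin, h_monic.natDegree_pow, h_deg]
  exact ⟨h_finrank, by rw [h_finrank]⟩
end
end
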